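/- Every compact framed submanifold (N, ν) of codimension p of a boundaryless smooth manifold M is a Pontryagin manifold: there exists a smooth map f : M → S^p and a regular value y ∈ S^p with a positively oriented basis w of T_y S^p such that f^{-1}(y) = N and f^*w = ν. -/

import Mathlib

/-!
# Statement 16: Every compact framed submanifold is a Pontryagin manifold
-/

open scoped RealInnerProductSpace Topology Topology.Homotopy unitInterval
open Function Set Metric

noncomputable section

namespace Paper


variable {E : Type*} [NormedAddCommGroup E] [InnerProductSpace ℝ E]

/-- The tangent space of a subset `M ⊆ E` at `x`: the span of all velocity vectors at
`x` of curves lying in `M`. -/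
def SubTangent {E' : Type*} [NormedAddCommGroup E'] [NormedSpace ℝ E']
    (M : Set E') (x : E') : Submodule ℝ E' :=
  Submodule.span ℝ {v | ∃ γ : ℝ → E', (∀ t, γ t ∈ M) ∧ γ 0 = x ∧ HasDerivAt γ v 0}

/-- Smoothness of a map on a subset: local extendability to smooth maps on open sets. -/
def SmoothOnSet {E' G : Type*} [NormedAddCommGroup E'] [NormedSpace ℝ E']
    [NormedAddCommGroup G] [NormedSpace ℝ G] (f : E' → G) (N : Set E') : Prop :=
  ∀ x ∈ N, ∃ (U : Set E') (g : E' → G), IsOpen U ∧ x ∈ U ∧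
    ContDiffOn ℝ (⊤ : ℕ∞) g U ∧ Set.EqOn f g (N ∩ U)

/-- `M` is a smooth `m`-dimensional submanifold (without boundary) of `E'`:
locally a regular level set of a smooth submersion. -/
def IsSubmanifold {E' : Type*} [NormedAddCommGroup E'] [NormedSpace ℝ E']
    (M : Set E') (m : ℕ) : Prop :=
  ∀ x ∈ M, ∃ (U : Set E')
      (Φ : E' → EuclideanSpace ℝ (Fin (Module.finrank ℝ E' - m))),
    IsOpen U ∧ x ∈ U ∧ ContDiffOn ℝ (⊤ : ℕ∞) Φ U ∧
    (∀ y ∈ U, Function.Surjective (fderiv ℝ Φ y)) ∧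
    U ∩ M = U ∩ Φ ⁻¹' {0}

/-- `L` is a derivative of `f` at `x ∈ M` along `M` (the derivative of a local smooth
extension of `f|_M`). -/
def HasDerivOn {E' G : Type*} [NormedAddCommGroup E'] [NormedSpace ℝ E']
    [NormedAddCommGroup G] [NormedSpace ℝ G]
    (f : E' → G) (M : Set E') (x : E') (L : E' →L[ℝ] G) : Prop :=
  ∃ g : E' → G, (∀ᶠ y in nhds x, y ∈ M → f y = g y) ∧ f x = g x ∧ HasFDerivAt g L x

/-- A framing of a submanifold `N ⊆ M` of codimension `p`: a smooth field of
bases of the orthogonal complement of `T_xN` inside `T_xM`. -/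
structure IsFraming (M : Set E) (N : Set E) (p : ℕ) (ν : Fin p → E → E) : Prop where
  smooth : ∀ i, SmoothOnSet (ν i) N
  mem_tangent : ∀ i, ∀ x ∈ N, ν i x ∈ SubTangent M x
  orth : ∀ i, ∀ x ∈ N, ∀ v ∈ SubTangent N x, ⟪ν i x, v⟫ = 0
  indep : ∀ x ∈ N, LinearIndependent ℝ fun i => ν i x
  spans : ∀ x ∈ N,
    SubTangent N x ⊔ Submodule.span ℝ (Set.range fun i => ν i x) = SubTangent M x

/-- `(N, ν)` is a compact framed submanifold of `M` of codimension `p`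
(`m` denotes the dimension of `M`). -/
structure IsFramedSubmanifold (M : Set E) (m : ℕ) (N : Set E) (p : ℕ)
    (ν : Fin p → E → E) : Prop where
  subset : N ⊆ M
  compact : IsCompact N
  submanifold : IsSubmanifold N (m - p)
  framing : IsFraming M N p ν

/-- The unit `p`-sphere in `ℝ^{p+1}`. -/
def sphereSet (p : ℕ) : Set (EuclideanSpace ℝ (Fin (p + 1))) :=
  Metric.sphere 0 1

/-- `w` is a positively oriented basis of the tangent space `T_y S^p`. -/
def PosOrientedTangentBasis (p : ℕ) (y : EuclideanSpace ℝ (Fin (p + 1)))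
    (w : Fin p → EuclideanSpace ℝ (Fin (p + 1))) : Prop :=
  (∀ i, ⟪y, w i⟫ = 0) ∧
  0 < Matrix.det (Matrix.of fun i j => (Fin.cons y w : Fin (p+1) → _) i j)

/-- `y` is a regular value of `f|_M`. -/
def IsRegularValue (p : ℕ) (f : E → EuclideanSpace ℝ (Fin (p + 1))) (M : Set E)
    (y : EuclideanSpace ℝ (Fin (p + 1))) : Prop :=
  ∀ x ∈ M, f x = y → ∃ L, HasDerivOn f M x L ∧
    SubTangent (sphereSet p) y ≤ Submodule.map (L : E →ₗ[ℝ] _) (SubTangent M x)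

/-- `(N, ν)` is the Pontryagin manifold `(f⁻¹(y), f^*w)` of `f`. -/
structure IsPontryaginManifold (m p : ℕ) (f : E → EuclideanSpace ℝ (Fin (p + 1)))
    (M : Set E) (y : EuclideanSpace ℝ (Fin (p + 1)))
    (w : Fin p → EuclideanSpace ℝ (Fin (p + 1)))
    (N : Set E) (ν : Fin p → E → E) : Prop where
  framed : IsFramedSubmanifold M m N p ν
  mem_sphere : y ∈ sphereSet p
  basis : PosOrientedTangentBasis p y w
  regular : IsRegularValue p f M y
  preimage : N = {x ∈ M | f x = y}
  pullback : ∀ x ∈ N, ∃ L, HasDerivOn f M x L ∧ ∀ i, L (ν i x) = w i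

/-- Smooth homotopy of maps on `M` with values in `target`. -/
def SmoothHomotopicOn {G : Type*} [NormedAddCommGroup G] [NormedSpace ℝ G]
    (M : Set E) (f g : E → G) (target : Set G) : Prop :=
  ∃ H : E × ℝ → G, SmoothOnSet H (M ×ˢ (univ : Set ℝ)) ∧
    (∀ x ∈ M, ∀ t : ℝ, H (x, t) ∈ target) ∧
    (∀ x ∈ M, H (x, 0) = f x) ∧ (∀ x ∈ M, H (x, 1) = g x)

/-- The product inner product on `E × ℝ`. -/
def prodInner (u v : E × ℝ) : ℝ := ⟪u.1, v.1⟫ + u.2 * v.2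

/-- Framed cobordism of framed submanifolds `(N, ν)`, `(N', ν')` of `M` within
`M × [0,1]`, following Milnor/Pontryagin. -/
def FramedCobordant (M : Set E) (m p : ℕ) (N : Set E) (ν : Fin p → E → E)
    (N' : Set E) (ν' : Fin p → E → E) : Prop :=
  ∃ (Xc : Set (E × ℝ)) (u : Fin p → (E × ℝ) → (E × ℝ)) (ε : ℝ),
    0 < ε ∧ ε < 1 / 2 ∧
    IsCompact Xc ∧ Xc ⊆ M ×ˢ Icc (0 : ℝ) 1 ∧
    Xc ∩ (univ ×ˢ Iio ε) = N ×ˢ Ico (0 : ℝ) ε ∧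
    Xc ∩ (univ ×ˢ Ioi (1 - ε)) = N' ×ˢ Ioc (1 - ε) 1 ∧
    IsSubmanifold (Xc ∩ (univ ×ˢ Ioo (0 : ℝ) 1)) (m - p + 1) ∧
    (∀ i, SmoothOnSet (u i) Xc) ∧
    (∀ z ∈ Xc ∩ (univ ×ˢ Ioo (0 : ℝ) 1),
      (∀ i, u i z ∈ SubTangent (M ×ˢ (univ : Set ℝ)) z) ∧
      (∀ i, ∀ v ∈ SubTangent (Xc ∩ (univ ×ˢ Ioo (0 : ℝ) 1)) z, prodInner (u i z) v = 0) ∧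
      LinearIndependent ℝ (fun i => u i z) ∧
      SubTangent (Xc ∩ (univ ×ˢ Ioo (0 : ℝ) 1)) z ⊔
          Submodule.span ℝ (Set.range fun i => u i z)
        = SubTangent (M ×ˢ (univ : Set ℝ)) z) ∧
    (∀ x t, (x, t) ∈ Xc → t < ε → ∀ i, u i (x, t) = (ν i x, 0)) ∧
    (∀ x t, (x, t) ∈ Xc → 1 - ε < t → ∀ i, u i (x, t) = (ν' i x, 0))

/-!
By Graves' theorem, the zero set of a smooth submersion is tangent to the kernel of its
differential, and locally it is also the zero set of any map that vanishes on it and whose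
differential has no larger kernel.
Locally near `N`, a left inverse of `c ↦ dΦ (∑ cᵢ νᵢ)` composed with a defining map `Φ` of `N` gives
`p` functions vanishing on `N` whose differentials are dual to `ν`. Since such functions form an
affine condition, a partition of unity glues them to a global map `F`. Where `F` vanishes near `N`,
the points of `M` are in `N`, because `T M ∩ ker dF = T N`. With a frame `w` of the tangent space of
the sphere at `y` and a cutoff `χ` equal to `1` near `N`, the map is the radial projection of
`(2χ - 1) y + χ ∑ Fᵢ wᵢ`: it is `-y` off the support of `χ`, it takes the value `y` only on `N`, and
there its derivative sends `νᵢ` to `wᵢ`.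
-/

open scoped NNReal ContDiff Manifold

section LevelSets

variable {E' G H : Type*} [NormedAddCommGroup E'] [NormedSpace ℝ E']
  [NormedAddCommGroup G] [NormedSpace ℝ G] [NormedAddCommGroup H] [NormedSpace ℝ H]

-- Graves' theorem
theorem exists_eventually_norm_sub_fiber_le [CompleteSpace E'] [CompleteSpace G] {Φ : E' → G}
    {Φ' : E' →L[ℝ] G} {x : E'} (hΦ : HasStrictFDerivAt Φ Φ' x) (hsurj : Surjective Φ') :
    ∃ C : ℝ≥0, 0 < C ∧ ∀ s ∈ 𝓝 x, ∀ᶠ z in 𝓝 x, ∃ z' ∈ s, Φ z' = Φ x ∧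
      ‖z' - z‖ ≤ C * ‖Φ z - Φ x‖ := by
  have hrange : Φ'.range = ⊤ := LinearMap.range_eq_top.2 hsurj
  let R := Φ'.nonlinearRightInverseOfSurjective hrange
  have hR : 0 < R.nnnorm := Φ'.nonlinearRightInverseOfSurjective_nnnorm_pos hrange
  obtain ⟨u, hu, happrox⟩ := hΦ.approximates_deriv_on_nhds (c := (2 * R.nnnorm)⁻¹)
    (.inr (by positivity))
  refine ⟨2 * R.nnnorm, by positivity, fun s hs => ?_⟩
  obtain ⟨r, hr, hball⟩ := Metric.nhds_basis_closedBall.mem_iff.1 (Filter.inter_mem hs hu)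
  have hsmall : ∀ᶠ z in 𝓝 x, 2 * R.nnnorm * ‖Φ z - Φ x‖ < r / 2 := by
    have hcont : ContinuousAt (fun z => 2 * R.nnnorm * ‖Φ z - Φ x‖) x :=
      continuousAt_const.mul (hΦ.continuousAt.sub continuousAt_const).norm
    exact hcont.eventually_lt_const (by simpa using half_pos hr)
  filter_upwards [hsmall, Metric.ball_mem_nhds x (half_pos hr)] with z hz hzx
  have hsub : closedBall z (2 * R.nnnorm * ‖Φ z - Φ x‖) ⊆ s ∩ u :=
    (closedBall_subset_closedBall' (by linarith [mem_ball.1 hzx])).trans hball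
  obtain ⟨z', hz', hΦz'⟩ := happrox.surjOn_closedBall_of_nonlinearRightInverse R (by positivity)
    (hsub.trans inter_subset_right) (show Φ x ∈ _ by
      rw [mem_closedBall, dist_comm, dist_eq_norm]
      push_cast
      field_simp
      norm_num)
  exact ⟨z', (hsub hz').1, hΦz', by simpa [dist_eq_norm] using hz'⟩

-- Between a zero `z` of `Ψ` and a nearby zero of `Φ`, the map `Φ - A ∘ Ψ` has the same increment
-- as `Φ`, but it has zero strict derivative at `x`.
theorem eventually_eq_zero_of_comp_eq [CompleteSpace E'] [CompleteSpace G]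
    {Φ : E' → G} {Ψ : E' → H} {Φ' : E' →L[ℝ] G} {Ψ' : E' →L[ℝ] H} {x : E'}
    (hΦ : HasStrictFDerivAt Φ Φ' x) (hsurj : Surjective Φ') (hΨ : HasStrictFDerivAt Ψ Ψ' x)
    {A : H →L[ℝ] G} (hA : A ∘L Ψ' = Φ') (hΦx : Φ x = 0)
    (hΨ0 : ∀ᶠ z in 𝓝 x, Φ z = 0 → Ψ z = 0) :
    ∀ᶠ z in 𝓝 x, Ψ z = 0 → Φ z = 0 := by
  obtain ⟨C, hC, hfiber⟩ := exists_eventually_norm_sub_fiber_le hΦ hsurj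
  have hD : HasStrictFDerivAt (fun z => Φ z - A (Ψ z)) (0 : E' →L[ℝ] G) x := by
    simpa [hA] using hΦ.fun_sub (A.hasStrictFDerivAt.comp x hΨ)
  obtain ⟨s, hs, hlip⟩ := hD.exists_lipschitzOnWith_of_nnnorm_lt (2 * C)⁻¹
    (by simpa using by positivity)
  filter_upwards [hfiber _ (Filter.inter_mem hs hΨ0), hs] with z hfib hz hΨz
  obtain ⟨z', ⟨hz's, hz'Ψ⟩, hz'Φ, hz'z⟩ := hfib
  have hΦz' : Φ z' = 0 := hz'Φ.trans hΦx
  have hincr : ‖Φ z‖ ≤ (2 * C : ℝ)⁻¹ * ‖z - z'‖ := by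
    simpa [hΨz, hΦz', hz'Ψ hΦz'] using hlip.norm_sub_le hz hz's
  have hhalf : ‖Φ z‖ ≤ ‖Φ z‖ / 2 :=
    calc ‖Φ z‖ ≤ (2 * C : ℝ)⁻¹ * ‖z - z'‖ := hincr
      _ ≤ (2 * C : ℝ)⁻¹ * (C * ‖Φ z‖) := by
        gcongr
        simpa [hΦx, norm_sub_rev] using hz'z
      _ = ‖Φ z‖ / 2 := by
        have : (0 : ℝ) < C := hC
        field_simp
  exact norm_le_zero_iff.1 (by linarith)

theorem exists_linearMap_comp_eq_of_ker_le_ker {K V V₁ V₂ : Type*} [DivisionRing K] [AddCommGroup V]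
    [Module K V] [AddCommGroup V₁] [Module K V₁] [AddCommGroup V₂] [Module K V₂]
    {f : V →ₗ[K] V₁} {g : V →ₗ[K] V₂}
    (h : g.ker ≤ f.ker) : ∃ A : V₂ →ₗ[K] V₁, A ∘ₗ g = f := by
  obtain ⟨A, hA⟩ := (g.ker.liftQ f h ∘ₗ g.quotKerEquivRange.symm.toLinearMap).exists_extend
  refine ⟨A, LinearMap.ext fun v => ?_⟩
  refine (LinearMap.congr_fun hA ⟨g v, g.mem_range_self v⟩).trans ?_
  rw [LinearMap.comp_apply, LinearEquiv.coe_coe, g.quotKerEquivRange_symm_apply_image,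
    Submodule.mkQ_apply, Submodule.liftQ_apply]

theorem eventually_eq_zero_of_ker_le_ker [CompleteSpace E'] [CompleteSpace G]
    [FiniteDimensional ℝ H] {Φ : E' → G} {Ψ : E' → H} {Φ' : E' →L[ℝ] G} {Ψ' : E' →L[ℝ] H} {x : E'}
    (hΦ : HasStrictFDerivAt Φ Φ' x) (hsurj : Surjective Φ') (hΨ : HasStrictFDerivAt Ψ Ψ' x)
    (hker : Ψ'.ker ≤ Φ'.ker) (hΦx : Φ x = 0) (hΨ0 : ∀ᶠ z in 𝓝 x, Φ z = 0 → Ψ z = 0) :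
    ∀ᶠ z in 𝓝 x, Ψ z = 0 → Φ z = 0 := by
  obtain ⟨A, hA⟩ := exists_linearMap_comp_eq_of_ker_le_ker hker
  exact eventually_eq_zero_of_comp_eq hΦ hsurj hΨ (A := A.toContinuousLinearMap)
    (ContinuousLinearMap.coe_injective hA) hΦx hΨ0

end LevelSets

section Tangent

variable {E' G : Type*} [NormedAddCommGroup E'] [NormedSpace ℝ E']
  [NormedAddCommGroup G] [NormedSpace ℝ G] {M : Set E'} {x v : E'}

theorem subTangent_le_ker {Φ : E' → G} {Φ' : E' →L[ℝ] G} {c : G} (hΦ : HasFDerivAt Φ Φ' x)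
    (hc : ∀ᶠ z in 𝓝 x, z ∈ M → Φ z = c) : SubTangent M x ≤ Φ'.ker := by
  refine Submodule.span_le.2 ?_
  rintro v ⟨γ, hγM, rfl, hγ⟩
  have hconst : Φ ∘ γ =ᶠ[𝓝 0] fun _ => c :=
    (hγ.continuousAt.eventually hc).mono fun t ht => ht (hγM t)
  exact (hΦ.comp_hasDerivAt 0 hγ).unique ((hasDerivAt_const 0 c).congr_of_eventuallyEq hconst)

theorem mem_subTangent_of_isLittleO {φ : ℝ → ℝ} (hφ : φ =o[𝓝 0] (id : ℝ → ℝ))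
    (h : ∀ᶠ t in 𝓝 (0 : ℝ), ∃ z ∈ M, ‖z - (x + t • v)‖ ≤ φ t) : v ∈ SubTangent M x := by
  have hφ0 : φ 0 = 0 := by simpa using (hφ.def one_pos).self_of_nhds
  have hxM : x ∈ M := by
    obtain ⟨z, hz, hzx⟩ := h.self_of_nhds
    have hzx' : z = x := by simpa [hφ0, sub_eq_zero] using hzx
    exact hzx' ▸ hz
  have hcurve : ∀ t : ℝ, ∃ z ∈ M, (∃ z ∈ M, ‖z - (x + t • v)‖ ≤ φ t) → ‖z - (x + t • v)‖ ≤ φ t := by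
    intro t
    by_cases ht : ∃ z ∈ M, ‖z - (x + t • v)‖ ≤ φ t
    · obtain ⟨z, hz, hzt⟩ := ht
      exact ⟨z, hz, fun _ => hzt⟩
    · exact ⟨x, hxM, fun h => (ht h).elim⟩
  choose γ hγM hγ using hcurve
  have hγφ : ∀ᶠ t in 𝓝 (0 : ℝ), ‖γ t - (x + t • v)‖ ≤ φ t := h.mono hγ
  have hγ0 : γ 0 = x := by
    simpa [hφ0, sub_eq_zero] using hγφ.self_of_nhds
  refine Submodule.subset_span ⟨γ, hγM, hγ0, hasDerivAt_iff_isLittleO.2 ?_⟩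
  have hO : (fun t => γ t - (x + t • v)) =O[𝓝 0] φ :=
    .of_bound 1 (hγφ.mono fun t ht => by simpa using ht.trans (le_abs_self _))
  simpa [hγ0, sub_sub, Function.id_def] using hO.trans_isLittleO hφ

end Tangent

section DefiningMaps

variable {E' G F : Type*} [NormedAddCommGroup E'] [NormedSpace ℝ E']
  [NormedAddCommGroup G] [NormedSpace ℝ G] [NormedAddCommGroup F] [NormedSpace ℝ F]

/-- The map `Φ` is a smooth submersion on the open set `U`, where it cuts out `M` as its zero
set. -/
structure IsLocalDefiningMap (Φ : E' → G) (U M : Set E') : Prop where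
  isOpen : IsOpen U
  contDiffOn : ContDiffOn ℝ ∞ Φ U
  surjective_fderiv : ∀ x ∈ U, Surjective (fderiv ℝ Φ x)
  inter_eq : U ∩ M = U ∩ Φ ⁻¹' {0}

theorem IsSubmanifold.exists_isLocalDefiningMap {M : Set E'} {m : ℕ} {x : E'}
    (hM : IsSubmanifold M m) (hx : x ∈ M) :
    ∃ (U : Set E') (Φ : E' → EuclideanSpace ℝ (Fin (Module.finrank ℝ E' - m))),
      x ∈ U ∧ IsLocalDefiningMap Φ U M := by
  obtain ⟨U, Φ, hU, hxU, hΦ, hsurj, hMU⟩ := hM x hx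
  exact ⟨U, Φ, hxU, hU, hΦ, hsurj, hMU⟩

-- In infinite dimension `finrank` is `0`, so `IsSubmanifold` only allows level sets of codimension
-- `0`.
theorem IsSubmanifold.isOpen_of_not_finiteDimensional {M : Set E'} {m : ℕ}
    (hM : IsSubmanifold M m) (hE : ¬ FiniteDimensional ℝ E') : IsOpen M := by
  refine isOpen_iff_mem_nhds.2 fun x hx => ?_
  obtain ⟨U, Φ, hxU, hΦ⟩ := hM.exists_isLocalDefiningMap hx
  have : IsEmpty (Fin (Module.finrank ℝ E' - m)) := by
    rw [Module.finrank_of_not_finite hE, Nat.zero_sub]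
    infer_instance
  have hUM : U ⊆ M := inter_eq_left.1 <| hΦ.inter_eq.trans <|
    inter_eq_left.2 fun z _ => Subsingleton.elim (Φ z) 0
  exact Filter.mem_of_superset (hΦ.isOpen.mem_nhds hxU) hUM

namespace IsLocalDefiningMap

variable {Φ : E' → G} {U M : Set E'} {x : E'}

theorem mem_iff (hΦ : IsLocalDefiningMap Φ U M) (hx : x ∈ U) : x ∈ M ↔ Φ x = 0 := by
  simpa [hx] using Set.ext_iff.1 hΦ.inter_eq x

theorem eventually_mem_iff (hΦ : IsLocalDefiningMap Φ U M) (hx : x ∈ U) :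
    ∀ᶠ z in 𝓝 x, z ∈ M ↔ Φ z = 0 :=
  Filter.mem_of_superset (hΦ.isOpen.mem_nhds hx) fun _ => hΦ.mem_iff

theorem hasStrictFDerivAt (hΦ : IsLocalDefiningMap Φ U M) (hx : x ∈ U) :
    HasStrictFDerivAt Φ (fderiv ℝ Φ x) x :=
  (hΦ.contDiffOn.contDiffAt (hΦ.isOpen.mem_nhds hx)).hasStrictFDerivAt (by simp)

theorem subTangent_eq_ker [CompleteSpace E'] [CompleteSpace G] (hΦ : IsLocalDefiningMap Φ U M)
    (hxU : x ∈ U) (hxM : x ∈ M) : SubTangent M x = (fderiv ℝ Φ x).ker := by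
  have hstrict := hΦ.hasStrictFDerivAt hxU
  refine le_antisymm (subTangent_le_ker hstrict.hasFDerivAt <|
    (hΦ.eventually_mem_iff hxU).mono fun z => Iff.mp) fun v hv => ?_
  obtain ⟨C, -, hfiber⟩ := exists_eventually_norm_sub_fiber_le hstrict (hΦ.surjective_fderiv x hxU)
  have hline : HasDerivAt (fun t : ℝ => x + t • v) v 0 := by
    simpa using ((hasDerivAt_id (0 : ℝ)).smul_const v).const_add x
  have hΦline : HasDerivAt (fun t : ℝ => Φ (x + t • v)) 0 0 := by
    have := hstrict.hasFDerivAt.comp_hasDerivAt_of_eq 0 hline (by simp)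
    rwa [show fderiv ℝ Φ x v = 0 from hv] at this
  have hφ : (fun t : ℝ => C * ‖Φ (x + t • v) - Φ x‖) =o[𝓝 0] (id : ℝ → ℝ) := by
    simpa [Function.id_def] using
      ((hasDerivAt_iff_isLittleO.1 hΦline).norm_left.const_mul_left (C : ℝ))
  have htendsto : Filter.Tendsto (fun t : ℝ => x + t • v) (𝓝 0) (𝓝 x) := by
    simpa using hline.continuousAt.tendsto
  refine mem_subTangent_of_isLittleO hφ ?_
  filter_upwards [htendsto.eventually (hfiber U (hΦ.isOpen.mem_nhds hxU))] with t ht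
  obtain ⟨z, hzU, hzΦ, hz⟩ := ht
  exact ⟨z, (hΦ.mem_iff hzU).2 (hzΦ.trans ((hΦ.mem_iff hxU).1 hxM)), hz⟩

end IsLocalDefiningMap

theorem exists_contDiffOn_leftInverse [CompleteSpace F] {n : ℕ∞ω} {V : Set E'} {x₀ : E'}
    {B : E' → F →L[ℝ] G} {C : G →L[ℝ] F} (hV : IsOpen V) (hx₀ : x₀ ∈ V)
    (hB : ContDiffOn ℝ n B V) (hC : C ∘L B x₀ = ContinuousLinearMap.id ℝ F) :
    ∃ (W : Set E') (A : E' → G →L[ℝ] F), IsOpen W ∧ x₀ ∈ W ∧ W ⊆ V ∧ ContDiffOn ℝ n A W ∧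
      ∀ x ∈ W, A x ∘L B x = ContinuousLinearMap.id ℝ F := by
  let T : E' → F →L[ℝ] F := fun x => C ∘L B x
  have hT : ContDiffOn ℝ n T V := contDiffOn_const.clm_comp hB
  refine ⟨V ∩ T ⁻¹' {a | IsUnit a}, fun x => Ring.inverse (T x) ∘L C,
    hT.continuousOn.isOpen_inter_preimage hV Units.isOpen, ⟨hx₀, ?_⟩, inter_subset_left, ?_, ?_⟩
  · change IsUnit (C ∘L B x₀)
    exact hC ▸ isUnit_one
  · refine ContDiffOn.clm_comp (fun x ⟨hxV, u, hu⟩ => ?_) contDiffOn_const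
    have hinv : ContDiffAt ℝ n Ring.inverse (T x) := hu ▸ contDiffAt_ringInverse ℝ u
    exact hinv.comp_contDiffWithinAt x ((hT x hxV).mono inter_subset_left)
  · exact fun x hx => Ring.inverse_mul_cancel _ hx.2

end DefiningMaps

section DualCoordinates

variable {M N : Set E} {k m p : ℕ} {ν : Fin p → E → E} {F : E → Fin p → ℝ} {x : E}

/-- The components of `F` vanish on `N`, and their differentials along `N` are dual to the frame
`ν`: the values of `F` are normal coordinates to first order. -/
def IsDualOn (ν : Fin p → E → E) (N : Set E) (F : E → Fin p → ℝ) : Prop :=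
  ∀ x ∈ N, F x = 0 ∧ ∀ i, fderiv ℝ F x (ν i x) = Pi.single i 1

theorem SmoothOnSet.exists_contDiffOn_family {ι E' G : Type*} [Finite ι] [NormedAddCommGroup E']
    [NormedSpace ℝ E'] [NormedAddCommGroup G] [NormedSpace ℝ G] {f : ι → E' → G} {N : Set E'}
    {x : E'} (hf : ∀ i, SmoothOnSet (f i) N) (hx : x ∈ N) :
    ∃ (U : Set E') (g : ι → E' → G), IsOpen U ∧ x ∈ U ∧
      ∀ i, ContDiffOn ℝ ∞ (g i) U ∧ EqOn (f i) (g i) (N ∩ U) := by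
  choose U g hU hxU hg hfg using fun i => hf i x hx
  exact ⟨⋂ i, U i, g, isOpen_iInter_of_finite hU, mem_iInter.2 hxU, fun i =>
    ⟨(hg i).mono (iInter_subset U i), (hfg i).mono (by gcongr; exact iInter_subset U i)⟩⟩

theorem contDiffOn_linearCombination {ι E' G : Type*} [Fintype ι] [NormedAddCommGroup E']
    [NormedSpace ℝ E'] [NormedAddCommGroup G] [NormedSpace ℝ G] {n : ℕ∞ω} {v : ι → E' → G}
    {s : Set E'} (hv : ∀ i, ContDiffOn ℝ n (v i) s) :
    ContDiffOn ℝ n (fun x =>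
      (Fintype.linearCombination ℝ fun i => v i x).toContinuousLinearMap) s := by
  refine contDiffOn_clm_apply.2 fun c => ?_
  simpa [Fintype.linearCombination_apply] using
    ContDiffOn.sum fun i _ => contDiffOn_const.smul (hv i)

theorem IsFraming.linearIndependent_fderiv [CompleteSpace E] {G : Type*} [NormedAddCommGroup G]
    [NormedSpace ℝ G] [CompleteSpace G] {Φ : E → G} {U : Set E} (hν : IsFraming M N p ν)
    (hΦ : IsLocalDefiningMap Φ U N) (hxU : x ∈ U) (hxN : x ∈ N) :
    LinearIndependent ℝ fun i => fderiv ℝ Φ x (ν i x) := by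
  refine (hν.indep x hxN).map (f := (fderiv ℝ Φ x : E →ₗ[ℝ] G)) ?_
  rw [← hΦ.subTangent_eq_ker hxU hxN]
  have hortho : Submodule.span ℝ (range fun i => ν i x) ⟂ SubTangent N x :=
    Submodule.span_le.2 <| range_subset_iff.2 fun i =>
      (Submodule.mem_orthogonal' _ _).2 (hν.orth i x hxN)
  exact hortho.disjoint

theorem IsFraming.exists_isDualOn_nhds [FiniteDimensional ℝ E] (hN : IsSubmanifold N k)
    (hν : IsFraming M N p ν) (hx : x ∈ N) :
    ∃ (W : Set E) (g : E → Fin p → ℝ), IsOpen W ∧ x ∈ W ∧ ContDiffOn ℝ ∞ g W ∧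
      IsDualOn ν (N ∩ W) g := by
  have : CompleteSpace E := FiniteDimensional.complete ℝ E
  obtain ⟨U, Φ, hxU, hΦ⟩ := hN.exists_isLocalDefiningMap hx
  obtain ⟨V, μ, hV, hxV, hμ⟩ := SmoothOnSet.exists_contDiffOn_family hν.smooth hx
  let B : E → (Fin p → ℝ) →L[ℝ] EuclideanSpace ℝ (Fin (Module.finrank ℝ E - k)) := fun y =>
    (Fintype.linearCombination ℝ fun i => fderiv ℝ Φ y (μ i y)).toContinuousLinearMap
  have hdΦ : ContDiffOn ℝ ∞ (fderiv ℝ Φ) U := hΦ.contDiffOn.fderiv_of_isOpen hΦ.isOpen (by simp)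
  have hB : ContDiffOn ℝ ∞ B (U ∩ V) := contDiffOn_linearCombination fun i =>
    (hdΦ.mono inter_subset_left).clm_apply ((hμ i).1.mono inter_subset_right)
  have hBν : ∀ y ∈ N ∩ (U ∩ V), ⇑(B y) = Fintype.linearCombination ℝ fun i =>
      fderiv ℝ Φ y (ν i y) := by
    intro y hy
    simp only [(hμ _).2 ⟨hy.1, hy.2.2⟩]
    rfl
  have hker : (B x : (Fin p → ℝ) →ₗ[ℝ]
      EuclideanSpace ℝ (Fin (Module.finrank ℝ E - k))).ker = ⊥ := by
    refine LinearMap.ker_eq_bot.2 ?_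
    change Injective (B x)
    rw [hBν x ⟨hx, hxU, hxV⟩]
    exact (hν.linearIndependent_fderiv hΦ hxU hx).fintypeLinearCombination_injective
  obtain ⟨C, hC⟩ := LinearMap.exists_leftInverse_of_injective _ hker
  obtain ⟨W, A, hW, hxW, hWV, hA, hAB⟩ := exists_contDiffOn_leftInverse
    (hΦ.isOpen.inter hV) ⟨hxU, hxV⟩ hB (C := C.toContinuousLinearMap)
    (ContinuousLinearMap.coe_injective hC)
  refine ⟨W, fun y => A y (Φ y), hW, hxW,
    hA.clm_apply (hΦ.contDiffOn.mono (hWV.trans inter_subset_left)), fun y hy => ?_⟩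
  have hΦy : Φ y = 0 := (hΦ.mem_iff (hWV hy.2).1).1 hy.1
  refine ⟨by simp [hΦy], fun i => ?_⟩
  have hAy := (hA.contDiffAt (hW.mem_nhds hy.2)).differentiableAt (by simp)
  have hΦy' := (hΦ.hasStrictFDerivAt (hWV hy.2).1).differentiableAt
  rw [fderiv_clm_apply hAy hΦy']
  simpa [hΦy, hBν y ⟨hy.1, hWV hy.2⟩] using DFunLike.congr_fun (hAB y hy.2) (Pi.single i 1)

theorem hasFDerivAt_finsum_smul_of_eq_zero {ι E' G : Type*} [NormedAddCommGroup E']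
    [NormedSpace ℝ E'] [FiniteDimensional ℝ E'] [NormedAddCommGroup G] [NormedSpace ℝ G]
    {s : Set E'} (ρ : SmoothPartitionOfUnity ι 𝓘(ℝ, E') E' s) {g : ι → E' → G}
    {g' : ι → E' →L[ℝ] G} {x : E'} (hg0 : ∀ a, x ∈ tsupport (ρ a) → g a x = 0)
    (hg' : ∀ a, x ∈ tsupport (ρ a) → HasFDerivAt (g a) (g' a) x) :
    HasFDerivAt (fun z => ∑ᶠ a, ρ a z • g a z) (∑ a ∈ ρ.fintsupport x, ρ a x • g' a) x := by
  have hfin : (fun z => ∑ᶠ a, ρ a z • g a z) =ᶠ[𝓝 x]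
      fun z => ∑ a ∈ ρ.fintsupport x, ρ a z • g a z := by
    filter_upwards [ρ.eventually_finsupport_subset x] with z hz
    exact (finsum_eq_sum_of_support_subset _ fun a ha =>
      hz ((ρ.mem_finsupport z).2 fun h => ha (by simp [h])))
  refine HasFDerivAt.congr_of_eventuallyEq (HasFDerivAt.fun_sum fun a ha => ?_) hfin
  have hxa : x ∈ tsupport (ρ a) := (ρ.mem_fintsupport_iff x a).1 ha
  have hρ : HasFDerivAt (ρ a) (fderiv ℝ (ρ a) x) x :=
    ((ρ a).contMDiff.contDiff.differentiable (by simp) x).hasFDerivAt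
  simpa [hg0 a hxa] using hρ.fun_smul (hg' a hxa)

theorem IsFraming.exists_isDualOn [FiniteDimensional ℝ E] (hcl : IsClosed N)
    (hN : IsSubmanifold N k) (hν : IsFraming M N p ν) :
    ∃ F : E → Fin p → ℝ, ContDiff ℝ ∞ F ∧ IsDualOn ν N F := by
  choose W g hW hxW hg hgν using fun x : N => hν.exists_isDualOn_nhds hN x.2
  obtain ⟨ρ, hρ⟩ := SmoothPartitionOfUnity.exists_isSubordinate 𝓘(ℝ, E) hcl W hW
    fun x hx => mem_iUnion.2 ⟨⟨x, hx⟩, hxW _⟩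
  have hg' : ∀ a, ∀ x ∈ W a, ContDiffAt ℝ ∞ (g a) x := fun a x hx =>
    (hg a).contDiffAt ((hW a).mem_nhds hx)
  refine ⟨fun z => ∑ᶠ a, ρ a z • g a z, (hρ.contMDiff_finsum_smul hW fun a =>
    (hg a).contMDiffOn).contDiff, fun x hx => ⟨?_, fun i => ?_⟩⟩
  · refine finsum_eq_zero_of_forall_eq_zero fun a => ?_
    by_cases hxa : x ∈ tsupport (ρ a)
    · rw [(hgν a x ⟨hx, hρ a hxa⟩).1, smul_zero]
    · rw [image_eq_zero_of_notMem_tsupport hxa, zero_smul]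
  · rw [(hasFDerivAt_finsum_smul_of_eq_zero ρ (fun a hxa => (hgν a x ⟨hx, hρ a hxa⟩).1)
      fun a hxa => ((hg' a x (hρ a hxa)).differentiableAt (by simp)).hasFDerivAt).fderiv]
    have hone := ρ.sum_finsupport' x hx (ρ.finsupport_subset_fintsupport x)
    calc (∑ a ∈ ρ.fintsupport x, ρ a x • fderiv ℝ (g a) x) (ν i x)
        = ∑ a ∈ ρ.fintsupport x, ρ a x • fderiv ℝ (g a) x (ν i x) := by simp
      _ = ∑ a ∈ ρ.fintsupport x, ρ a x • Pi.single i 1 := Finset.sum_congr rfl fun a ha => by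
        rw [(hgν a x ⟨hx, hρ a ((ρ.mem_fintsupport_iff x a).1 ha)⟩).2 i]
      _ = Pi.single i 1 := by rw [← Finset.sum_smul, hone, one_smul]

theorem IsDualOn.fderiv_linearCombination (hF : IsDualOn ν N F) (hx : x ∈ N) (c : Fin p → ℝ) :
    fderiv ℝ F x (∑ i, c i • ν i x) = c := by
  simp only [map_sum, map_smul, (hF x hx).2]
  exact (pi_eq_sum_univ' c).symm

theorem IsDualOn.subTangent_inf_ker_le (hF : IsDualOn ν N F) (hFx : DifferentiableAt ℝ F x)
    (hν : IsFraming M N p ν) (hx : x ∈ N) :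
    SubTangent M x ⊓ (fderiv ℝ F x).ker ≤ SubTangent N x := by
  rintro v ⟨hvM, hvF⟩
  have hvM' : v ∈ SubTangent N x ⊔ Submodule.span ℝ (range fun i => ν i x) :=
    (hν.spans x hx).symm ▸ hvM
  obtain ⟨u, hu, s, hs, rfl⟩ := Submodule.mem_sup.1 hvM'
  obtain ⟨c, rfl⟩ := (Submodule.mem_span_range_iff_exists_fun ℝ).1 hs
  have hFu : fderiv ℝ F x u = 0 :=
    subTangent_le_ker hFx.hasFDerivAt (Filter.Eventually.of_forall fun z hz => (hF z hz).1) hu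
  have hc : c = 0 :=
    calc c = fderiv ℝ F x (u + ∑ i, c i • ν i x) := by
          rw [map_add, hFu, zero_add, hF.fderiv_linearCombination hx]
      _ = 0 := hvF
  simpa [hc] using hu

theorem IsDualOn.eventually_mem [FiniteDimensional ℝ E] (hF : IsDualOn ν N F)
    (hFx : HasStrictFDerivAt F (fderiv ℝ F x) x) (hM : IsSubmanifold M m) (hN : IsSubmanifold N k)
    (hNM : N ⊆ M) (hν : IsFraming M N p ν) (hx : x ∈ N) :
    ∀ᶠ z in 𝓝 x, z ∈ M → F z = 0 → z ∈ N := by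
  have : CompleteSpace E := FiniteDimensional.complete ℝ E
  obtain ⟨U, Φ, hxU, hΦ⟩ := hN.exists_isLocalDefiningMap hx
  obtain ⟨V, Ψ, hxV, hΨ⟩ := hM.exists_isLocalDefiningMap (hNM hx)
  have hker : ((fderiv ℝ Ψ x).prod (fderiv ℝ F x)).ker ≤ (fderiv ℝ Φ x).ker := by
    rw [← hΦ.subTangent_eq_ker hxU hx]
    intro v hv
    have hvΨ : v ∈ (fderiv ℝ Ψ x).ker := congrArg Prod.fst hv
    have hvF : v ∈ (fderiv ℝ F x).ker := congrArg Prod.snd hv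
    rw [← hΨ.subTangent_eq_ker hxV (hNM hx)] at hvΨ
    exact hF.subTangent_inf_ker_le hFx.differentiableAt hν hx ⟨hvΨ, hvF⟩
  have hzero := eventually_eq_zero_of_ker_le_ker (hΦ.hasStrictFDerivAt hxU)
    (hΦ.surjective_fderiv x hxU) ((hΨ.hasStrictFDerivAt hxV).prodMk hFx) hker
    ((hΦ.mem_iff hxU).1 hx) (by
      filter_upwards [hΦ.eventually_mem_iff hxU, hΨ.eventually_mem_iff hxV] with z hzN hzM hΦz
      have hz : z ∈ N := hzN.2 hΦz
      exact Prod.ext (hzM.1 (hNM hz)) (hF z hz).1)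
  filter_upwards [hzero, hΦ.eventually_mem_iff hxU, hΨ.eventually_mem_iff hxV]
    with z hz hzN hzM hzM' hFz
  exact hzN.2 (hz (Prod.ext (hzM.1 hzM') hFz))

end DualCoordinates

section CollapseData

variable {M N : Set E} {k m p : ℕ} {ν : Fin p → E → E} {x : E}

/-- The ingredients of the Pontryagin–Thom collapse of `M` onto `N`: normal coordinates `F` dual to
the framing `ν`, and a cutoff `χ`, equal to `1` near `N`, whose support avoids every zero of `F` in
`M` off `N`. -/
structure IsCollapseDatum (M N : Set E) (ν : Fin p → E → E) (χ : E → ℝ) (F : E → Fin p → ℝ) :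
    Prop where
  contDiff_cutoff : ContDiff ℝ ∞ χ
  contDiff_coord : ContDiff ℝ ∞ F
  cutoff_eventuallyEq_one : ∀ x ∈ N, χ =ᶠ[𝓝 x] 1
  isDualOn : IsDualOn ν N F
  mem_of_coord_eq_zero : ∀ x ∈ M, χ x ≠ 0 → F x = 0 → x ∈ N

theorem exists_isCollapseDatum_of_finiteDimensional [FiniteDimensional ℝ E]
    (hM : IsSubmanifold M m) (hNM : N ⊆ M) (hcl : IsClosed N) (hN : IsSubmanifold N k)
    (hν : IsFraming M N p ν) : ∃ χ F, IsCollapseDatum M N ν χ F := by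
  obtain ⟨F, hF, hFν⟩ := hν.exists_isDualOn hcl hN
  have hsub : N ⊆ interior {z | z ∈ M → F z = 0 → z ∈ N} := fun x hx =>
    mem_interior_iff_mem_nhds.2 <|
      hFν.eventually_mem (hF.contDiffAt.hasStrictFDerivAt (by simp)) hM hN hNM hν hx
  obtain ⟨χ, hχ1, hχ0, -⟩ := exists_contMDiffMap_one_nhds_of_subset_interior
    (n := (⊤ : ℕ∞)) 𝓘(ℝ, E) hcl hsub
  exact ⟨χ, F, χ.contMDiff.contDiff, hF, fun x hx => hχ1.filter_mono (nhds_le_nhdsSet hx), hFν,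
    fun x hxM hχx => of_not_not (mt (hχ0 x) hχx) hxM⟩

theorem subTangent_univ {E' : Type*} [NormedAddCommGroup E'] [NormedSpace ℝ E'] (x : E') :
    SubTangent univ x = ⊤ :=
  eq_top_iff.2 fun v _ => mem_subTangent_of_isLittleO (Asymptotics.isLittleO_zero _ _) <|
    Filter.Eventually.of_forall fun t => ⟨x + t • v, mem_univ _, by simp⟩

theorem exists_isCollapseDatum_of_not_finiteDimensional (hE : ¬ FiniteDimensional ℝ E)
    (hcl : IsClosed N) (hN : IsSubmanifold N k) (hν : IsFraming M N p ν) :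
    ∃ χ F, IsCollapseDatum M N ν χ F := by
  rcases isClopen_iff.1 ⟨hcl, hN.isOpen_of_not_finiteDimensional hE⟩ with rfl | rfl
  · exact ⟨0, 0, contDiff_const, contDiff_const, fun x hx => hx.elim, fun x hx => hx.elim,
      fun x _ h => (h rfl).elim⟩
  · have : IsEmpty (Fin p) := ⟨fun i => hν.indep 0 (mem_univ 0) |>.ne_zero i <|
      inner_self_eq_zero.1 <| hν.orth i 0 (mem_univ 0) _ (by simp [subTangent_univ])⟩
    exact ⟨1, 0, contDiff_const, contDiff_const, fun x _ => .rfl,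
      fun x _ => ⟨rfl, fun i => isEmptyElim i⟩, fun x _ _ _ => mem_univ x⟩

theorem exists_isCollapseDatum (hM : IsSubmanifold M m) (hNM : N ⊆ M) (hcl : IsClosed N)
    (hN : IsSubmanifold N k) (hν : IsFraming M N p ν) : ∃ χ F, IsCollapseDatum M N ν χ F := by
  by_cases hE : FiniteDimensional ℝ E
  · exact exists_isCollapseDatum_of_finiteDimensional hM hNM hcl hN hν
  · exact exists_isCollapseDatum_of_not_finiteDimensional hE hcl hN hν

end CollapseData

section Collapse

variable {V : Type*} [NormedAddCommGroup V] [InnerProductSpace ℝ V] {x y v : V} {c : ℝ}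

theorem contDiffAt_normalize {n : ℕ∞ω} (hx : x ≠ 0) :
    ContDiffAt ℝ n (NormedSpace.normalize : V → V) x :=
  ((contDiffAt_norm ℝ hx).inv (norm_ne_zero_iff.2 hx)).smul contDiffAt_id

theorem hasFDerivAt_normalize (hx : x ≠ 0) :
    HasFDerivAt NormedSpace.normalize (‖x‖⁻¹ • (ContinuousLinearMap.id ℝ V -
      (innerSL ℝ (NormedSpace.normalize x)).smulRight (NormedSpace.normalize x))) x := by
  have hnorm : HasFDerivAt (fun z : V => ‖z‖) (innerSL ℝ (NormedSpace.normalize x)) x := by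
    convert! (hasStrictFDerivAt_norm_sq x).hasFDerivAt.sqrt (by simpa using hx) using 1
    · simp
    · ext v
      suffices ‖x‖⁻¹ * ⟪x, v⟫ = 1 / (2 * ‖x‖) * (2 * ⟪x, v⟫) by
        simpa [NormedSpace.normalize, inner_smul_left]
      ring
  have hinv := (hasDerivAt_inv (norm_ne_zero_iff.2 hx)).comp_hasFDerivAt x hnorm
  convert! hinv.smul (hasFDerivAt_id x) using 1
  ext v
  have hcoeff : ‖x‖⁻¹ * (‖x‖⁻¹ * ⟪x, v⟫ * ‖x‖⁻¹) = (‖x‖ ^ 2)⁻¹ * ‖x‖⁻¹ * ⟪x, v⟫ := by ring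
  simp [NormedSpace.normalize, smul_smul, sub_eq_add_neg, hcoeff]

/-- The point of `V` whose radial projection to the unit sphere is the collapse map: it runs from
the antipode `-y` of the base point at `c = 0` to the point `y + v` of the affine tangent space at
`c = 1`. -/
def collapseVector (y : V) (c : ℝ) (v : V) : V := (2 * c - 1) • y + c • v

theorem inner_collapseVector (hy : ‖y‖ = 1) (hv : ⟪y, v⟫ = 0) :
    ⟪y, collapseVector y c v⟫ = 2 * c - 1 := by
  simp [collapseVector, inner_add_right, inner_smul_right, hy, hv]

theorem collapseVector_ne_zero (hy : ‖y‖ = 1) (hv : ⟪y, v⟫ = 0) (hcv : c ≠ 0 → v = 0 → c = 1) :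
    collapseVector y c v ≠ 0 := by
  intro h
  have hc : 2 * c - 1 = 0 := by rw [← inner_collapseVector hy hv, h, inner_zero_right]
  have hc0 : c ≠ 0 := by rintro rfl; norm_num at hc
  have hv0 : v = 0 := by simpa [collapseVector, hc, hc0] using h
  linarith [hcv hc0 hv0]

theorem normalize_collapseVector_eq_iff (hy : ‖y‖ = 1) (hv : ⟪y, v⟫ = 0) :
    NormedSpace.normalize (collapseVector y c v) = y ↔ 1 / 2 < c ∧ v = 0 := by
  constructor
  · intro h
    have hsmul : ‖collapseVector y c v‖ • y = collapseVector y c v := by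
      conv_rhs => rw [← NormedSpace.norm_smul_normalize (collapseVector y c v), h]
    have hnorm : ‖collapseVector y c v‖ = 2 * c - 1 := by
      rw [← inner_collapseVector hy hv, ← hsmul, inner_smul_right, real_inner_self_eq_norm_sq, hy]
      simp [hsmul]
    have hpos : 0 < ‖collapseVector y c v‖ := norm_pos_iff.2 <|
      NormedSpace.norm_normalize_eq_one_iff.1 (by rw [h, hy])
    have hc : 1 / 2 < c := by linarith
    have hc0 : c ≠ 0 := by linarith
    refine ⟨hc, ?_⟩
    rw [hnorm, collapseVector] at hsmul
    simpa [hc0] using hsmul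
  · rintro ⟨hc, rfl⟩
    rw [collapseVector, smul_zero, add_zero, NormedSpace.normalize_smul_of_pos (by linarith),
      NormedSpace.normalize_eq_self_of_norm_eq_one hy]

/-- The Pontryagin–Thom collapse map: a point with normal coordinates `F` is sent towards the
antipode of `y` along the direction with coordinates `F` in the tangent frame `w`, and points
outside the support of the cutoff `χ` are sent to `-y`. -/
def collapseMap {p : ℕ} (y : V) (w : Fin p → V) (χ : E → ℝ) (F : E → Fin p → ℝ) (x : E) : V :=
  NormedSpace.normalize (collapseVector y (χ x) (∑ i, F x i • w i))

namespace IsCollapseDatum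

variable {M N : Set E} {p : ℕ} {ν : Fin p → E → E} {χ : E → ℝ} {F : E → Fin p → ℝ} {z : E}
  {w : Fin p → V}

theorem collapseVector_ne_zero (h : IsCollapseDatum M N ν χ F) (hy : ‖y‖ = 1)
    (hw : ∀ i, ⟪y, w i⟫ = 0) (hwi : LinearIndependent ℝ w) (hz : z ∈ M) :
    collapseVector y (χ z) (∑ i, F z i • w i) ≠ 0 := by
  refine Paper.collapseVector_ne_zero hy (by simp [inner_sum, inner_smul_right, hw])
    fun hχ hF => ?_
  have hFz : F z = 0 := funext (Fintype.linearIndependent_iff.1 hwi _ hF)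
  exact (h.cutoff_eventuallyEq_one z (h.mem_of_coord_eq_zero z hz hχ hFz)).eq_of_nhds

theorem collapseMap_eq_iff (h : IsCollapseDatum M N ν χ F) (hy : ‖y‖ = 1)
    (hw : ∀ i, ⟪y, w i⟫ = 0) (hwi : LinearIndependent ℝ w) (hz : z ∈ M) :
    collapseMap y w χ F z = y ↔ z ∈ N := by
  rw [collapseMap, normalize_collapseVector_eq_iff hy (by simp [inner_sum, inner_smul_right, hw])]
  constructor
  · rintro ⟨hχ, hF⟩
    exact h.mem_of_coord_eq_zero z hz (by linarith)
      (funext (Fintype.linearIndependent_iff.1 hwi _ hF))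
  · intro hzN
    have hχ : χ z = 1 := (h.cutoff_eventuallyEq_one z hzN).eq_of_nhds
    have hF : F z = 0 := (h.isDualOn z hzN).1
    norm_num [hχ, hF]

theorem smoothOnSet_collapseMap (h : IsCollapseDatum M N ν χ F) (hy : ‖y‖ = 1)
    (hw : ∀ i, ⟪y, w i⟫ = 0) (hwi : LinearIndependent ℝ w) :
    SmoothOnSet (collapseMap y w χ F) M := by
  have hχ := h.contDiff_cutoff
  have hF := h.contDiff_coord
  have hv : ContDiff ℝ ∞ fun z => collapseVector y (χ z) (∑ i, F z i • w i) := by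
    unfold collapseVector
    fun_prop
  exact fun z hz => ⟨_, collapseMap y w χ F, isOpen_ne_fun hv.continuous continuous_const,
    h.collapseVector_ne_zero hy hw hwi hz, fun z hz =>
      ((contDiffAt_normalize hz).comp z hv.contDiffAt).contDiffWithinAt, fun _ _ => rfl⟩

theorem exists_hasFDerivAt_collapseMap (h : IsCollapseDatum M N ν χ F) (hy : ‖y‖ = 1)
    (hw : ∀ i, ⟪y, w i⟫ = 0) (hz : z ∈ N) :
    ∃ L : E →L[ℝ] V, HasFDerivAt (collapseMap y w χ F) L z ∧ ∀ i, L (ν i z) = w i := by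
  have hF' : HasFDerivAt F (fderiv ℝ F z) z :=
    (h.contDiff_coord.differentiable (by simp) z).hasFDerivAt
  let ι : (Fin p → ℝ) →L[ℝ] V := (Fintype.linearCombination ℝ w).toContinuousLinearMap
  have hloc : (fun z => collapseVector y (χ z) (∑ i, F z i • w i)) =ᶠ[𝓝 z]
      fun z => y + ι (F z) := by
    filter_upwards [h.cutoff_eventuallyEq_one z hz] with z' hχ
    norm_num [collapseVector, hχ, ι, Fintype.linearCombination_apply]
  have hvz : collapseVector y (χ z) (∑ i, F z i • w i) = y := by
    rw [hloc.eq_of_nhds, (h.isDualOn z hz).1, map_zero, add_zero]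
  have hv' := ((ι.hasFDerivAt.comp z hF').const_add y).congr_of_eventuallyEq hloc
  have hnorm : HasFDerivAt NormedSpace.normalize
      (ContinuousLinearMap.id ℝ V - (innerSL ℝ y).smulRight y)
      (collapseVector y (χ z) (∑ i, F z i • w i)) := by
    have hy0 : y ≠ 0 := norm_ne_zero_iff.1 (hy.symm ▸ one_ne_zero)
    simpa only [hvz, hy, NormedSpace.normalize_eq_self_of_norm_eq_one hy, inv_one, one_smul] using
      hasFDerivAt_normalize hy0
  refine ⟨_, hnorm.comp z hv', fun i => ?_⟩
  simp [hw, (h.isDualOn z hz).2 i, ι, Fintype.linearCombination_apply_single]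

end IsCollapseDatum

end Collapse

section Sphere

variable {p : ℕ} {y : EuclideanSpace ℝ (Fin (p + 1))} {w : Fin p → EuclideanSpace ℝ (Fin (p + 1))}

theorem PosOrientedTangentBasis.linearIndependent (h : PosOrientedTangentBasis p y w) :
    LinearIndependent ℝ w := by
  have hrows := Matrix.linearIndependent_rows_of_det_ne_zero h.2.ne'
  have hcons : LinearIndependent ℝ (Fin.cons y w : Fin (p + 1) → EuclideanSpace ℝ (Fin (p + 1))) :=
    .of_comp (EuclideanSpace.equiv (Fin (p + 1)) ℝ).toLinearMap hrows
  exact hcons.comp Fin.succ (Fin.succ_injective p)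

theorem subTangent_sphere_le {V : Type*} [NormedAddCommGroup V] [InnerProductSpace ℝ V] (r : ℝ)
    (y : V) : SubTangent (sphere 0 r) y ≤ (ℝ ∙ y)ᗮ := by
  have hle := subTangent_le_ker (M := sphere 0 r) (c := r ^ 2)
    (hasStrictFDerivAt_norm_sq y).hasFDerivAt
    (Filter.Eventually.of_forall fun z hz => by rw [mem_sphere_zero_iff_norm.1 hz])
  refine hle.trans fun v hv => Submodule.mem_orthogonal_singleton_iff_inner_right.2 ?_
  simpa using hv

theorem PosOrientedTangentBasis.subTangent_sphereSet_le (h : PosOrientedTangentBasis p y w)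
    (hy : y ∈ sphereSet p) : SubTangent (sphereSet p) y ≤ Submodule.span ℝ (range w) := by
  have hy0 : y ≠ 0 := ne_zero_of_mem_unit_sphere ⟨y, hy⟩
  have hspan : Submodule.span ℝ (range w) = (ℝ ∙ y)ᗮ := by
    refine Submodule.eq_of_le_of_finrank_eq (Submodule.span_le.2 (range_subset_iff.2 fun i =>
      Submodule.mem_orthogonal_singleton_iff_inner_right.2 (h.1 i))) ?_
    have : Fact (Module.finrank ℝ (EuclideanSpace ℝ (Fin (p + 1))) = p + 1) := ⟨by simp⟩
    rw [finrank_span_eq_card h.linearIndependent, Submodule.finrank_orthogonal_span_singleton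
      (n := p) hy0, Fintype.card_fin]
  exact hspan ▸ subTangent_sphere_le 1 y

theorem exists_posOrientedTangentBasis (p : ℕ) :
    ∃ y ∈ sphereSet p, ∃ w, PosOrientedTangentBasis p y w := by
  refine ⟨EuclideanSpace.single 0 1, by simp [sphereSet],
    fun i => EuclideanSpace.single i.succ 1,
    fun i => by simp [EuclideanSpace.inner_single_left], ?_⟩
  have hone : (Matrix.of fun i j => (Fin.cons (EuclideanSpace.single 0 1)
      fun i : Fin p => EuclideanSpace.single i.succ 1 :
        Fin (p + 1) → EuclideanSpace ℝ (Fin (p + 1))) i j) = 1 := by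
    ext i j
    cases i using Fin.cases <;> simp [Matrix.one_apply, eq_comm]
  rw [hone, Matrix.det_one]
  exact one_pos

end Sphere

theorem framed_submanifold_is_pontryagin_general (m k p : ℕ) (M : Set E) (hM : IsSubmanifold M m)
    (N : Set E) (hNM : N ⊆ M) (hcl : IsClosed N) (hN : IsSubmanifold N k) (ν : Fin p → E → E)
    (hν : IsFraming M N p ν) (y : EuclideanSpace ℝ (Fin (p + 1))) (hy : y ∈ sphereSet p)
    (w : Fin p → EuclideanSpace ℝ (Fin (p + 1))) (hw : PosOrientedTangentBasis p y w) :
    ∃ f : E → EuclideanSpace ℝ (Fin (p + 1)),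
      SmoothOnSet f M ∧ (∀ x ∈ M, f x ∈ sphereSet p) ∧ IsRegularValue p f M y ∧
      N = {x ∈ M | f x = y} ∧ ∀ x ∈ N, ∃ L, HasDerivOn f M x L ∧ ∀ i, L (ν i x) = w i := by
  have hy1 : ‖y‖ = 1 := mem_sphere_zero_iff_norm.1 hy
  have hwi := hw.linearIndependent
  obtain ⟨χ, F, h⟩ := exists_isCollapseDatum hM hNM hcl hN hν
  have hpre : ∀ x ∈ M, collapseMap y w χ F x = y ↔ x ∈ N := fun x =>
    h.collapseMap_eq_iff hy1 hw.1 hwi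
  have hpull : ∀ x ∈ N, ∃ L, HasDerivOn (collapseMap y w χ F) M x L ∧ ∀ i, L (ν i x) = w i := by
    intro x hx
    obtain ⟨L, hL, hLν⟩ := h.exists_hasFDerivAt_collapseMap hy1 hw.1 hx
    exact ⟨L, ⟨_, Filter.Eventually.of_forall fun _ _ => rfl, rfl, hL⟩, hLν⟩
  refine ⟨collapseMap y w χ F, h.smoothOnSet_collapseMap hy1 hw.1 hwi, fun x hx =>
    mem_sphere_zero_iff_norm.2 <| NormedSpace.norm_normalize_eq_one_iff.2 <|
      h.collapseVector_ne_zero hy1 hw.1 hwi hx, fun x hx hxy => ?_,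
    Set.ext fun x => ⟨fun hx => ⟨hNM hx, (hpre x (hNM hx)).2 hx⟩, fun hx => (hpre x hx.1).1 hx.2⟩,
    hpull⟩
  have hxN : x ∈ N := (hpre x hx).1 hxy
  obtain ⟨L, hL, hLν⟩ := hpull x hxN
  exact ⟨L, hL, (hw.subTangent_sphereSet_le hy).trans <| Submodule.span_le.2 <|
    range_subset_iff.2 fun i => ⟨ν i x, hν.mem_tangent i x hxN, hLν i⟩⟩

/-- **Statement 16.**  Every compact framed submanifold `(N, ν)` of codimension `p` of a
boundaryless smooth manifold `M` is the Pontryagin manifold `(f⁻¹(y), f^*w)` of some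
smooth map `f : M → S^p`, regular value `y`, and positively oriented basis `w` of
`T_y S^p`. -/
theorem framed_submanifold_is_pontryagin (m p : ℕ) (M : Set E)
    (hM : IsSubmanifold M m) (N : Set E) (ν : Fin p → E → E)
    (hN : IsFramedSubmanifold M m N p ν) :
    ∃ f : E → EuclideanSpace ℝ (Fin (p + 1)),
      SmoothOnSet f M ∧ (∀ x ∈ M, f x ∈ sphereSet p) ∧
      ∃ y w, IsPontryaginManifold m p f M y w N ν := by
  obtain ⟨y, hy, w, hw⟩ := exists_posOrientedTangentBasis p
  obtain ⟨f, hf, hfM, hreg, hpre, hpull⟩ := framed_submanifold_is_pontryagin_general m (m - p) p M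
    hM N hN.subset hN.compact.isClosed hN.submanifold ν hN.framing y hy w hw
  exact ⟨f, hf, hfM, y, w, hN, hy, hw, hreg, hpre, hpull⟩

end Paper
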